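/- arXiv:1212.6663 — 2 statements merged into one kernel-verified Lean document; each statement's English description precedes it below -/
import Mathlib

section
/- For every real x ≥ 2 and every integer d ≥ 3, one has 1/x − (d/(2x+d−1))^d > 0; equivalently, (d/(2r+d−1))^d < 1/r for all integers r ≥ 2 and d ≥ 3. -/
/-- With `a = (2x - 1)/d`, Bernoulli's inequality gives
`((2x + d - 1)/d)^d = (1 + a)^d ≥ 1 + d * a = 2x > x`; take reciprocals. -/
lemma pow_div_lt_one_div (x : ℝ) (hx : 2 ≤ x) (d : ℕ) (hd : 3 ≤ d) :
    ((d : ℝ) / (2 * x + (d : ℝ) - 1)) ^ d < 1 / x := by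
  have hd0 : (0 : ℝ) < d := by exact_mod_cast (by omega : 0 < d)
  have ha : 0 ≤ (2 * x - 1) / (d : ℝ) := div_nonneg (by linarith) hd0.le
  have hB := one_add_mul_le_pow (show (-2 : ℝ) ≤ (2 * x - 1) / d by linarith) d
  rw [mul_div_cancel₀ _ hd0.ne'] at hB
  have hs : (d : ℝ) / (2 * x + (d : ℝ) - 1) = (1 + (2 * x - 1) / d)⁻¹ := by
    rw [one_add_div hd0.ne', inv_div]
    ring_nf
  rw [hs, inv_pow, ← one_div]
  exact one_div_lt_one_div_of_lt (by linarith) (by linarith)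

/-- For every real `x ≥ 2` and every integer `d ≥ 3`, one has
`1/x - (d/(2x + d - 1))^d > 0`; equivalently, `(d/(2r + d - 1))^d < 1/r` for all
integers `r ≥ 2` and `d ≥ 3`. -/
theorem coherence_key_inequality :
    (∀ x : ℝ, 2 ≤ x → ∀ d : ℕ, 3 ≤ d →
      0 < 1 / x - ((d : ℝ) / (2 * x + (d : ℝ) - 1)) ^ d) ∧
    (∀ r d : ℕ, 2 ≤ r → 3 ≤ d →
      ((d : ℝ) / (2 * (r : ℝ) + (d : ℝ) - 1)) ^ d < 1 / (r : ℝ)) := by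
  exact ⟨fun x hx d hd => sub_pos.2 (pow_div_lt_one_div x hx d hd),
    fun r d hr hd => pow_div_lt_one_div r (by exact_mod_cast hr) d hd⟩
end

section
/- For α ∈ ℝ, let Q(α) be the 2×2 rotation matrix with rows (cos α, sin α) and (−sin α, cos α), and for β_p ∈ (−π/4, 0) ∪ (0, π/4) let h_p = (cos β_p, i sin β_p)ᵀ ∈ ℂ² and g_p = Q(α_p)h_p. Then for β_p, β_q ∈ (−π/4, 0) ∪ (0, π/4) and α_p, α_q ∈ ℝ, |g_pᴴ g_q| = 1 if and only if α_p = α_q + kπ for some integer k and β_p = β_q. -/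
/-!
With `γ = αq - αp`, the rotations combine to `Q(αp)ᵀ Q(αq) = Q(γ)`, which gives
`g_pᴴ g_q = cos γ cos (βp - βq) + i sin γ sin (βp + βq)`, and therefore
`1 - |g_pᴴ g_q|² = cos² γ sin² (βp - βq) + sin² γ cos² (βp + βq)`.
Modulus one thus means that both squares on the right vanish. Since `|βp + βq| < π / 2`, the
factor `cos (βp + βq)` is positive, so `sin γ = 0`; then `cos γ ≠ 0`, so `sin (βp - βq) = 0`, and
`|βp - βq| < π` gives `βp = βq`.
-/

open scoped BigOperators ComplexConjugate
open Real

/-- The `2 × 2` rotation matrix with rows `(cos α, sin α)` and `(-sin α, cos α)`. -/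
noncomputable def Qrot (α : ℝ) : Matrix (Fin 2) (Fin 2) ℝ :=
  !![Real.cos α, Real.sin α; -Real.sin α, Real.cos α]

/-- The polarization vector `g = Q(α) h` with `h = (cos β, i sin β)ᵀ ∈ ℂ²`. -/
noncomputable def polarVec (α β : ℝ) : Fin 2 → ℂ :=
  Matrix.mulVec ((Qrot α).map Complex.ofReal) ![(Real.cos β : ℂ), Complex.I * Real.sin β]

theorem polarVec_inner (αp αq βp βq : ℝ) :
    ∑ j, conj (polarVec αp βp j) * polarVec αq βq j =
      ((cos (αq - αp) * cos (βp - βq) : ℝ) : ℂ)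
        + ((sin (αq - αp) * sin (βp + βq) : ℝ) : ℂ) * Complex.I := by
  apply Complex.ext <;>
  simp [polarVec, Qrot, Matrix.mulVec, dotProduct, Fin.sum_univ_two, -Complex.ofReal_cos,
    -Complex.ofReal_sin, cos_sub, sin_sub, sin_add] <;> ring

theorem one_sub_norm_sq_polarVec_inner (αp αq βp βq : ℝ) :
    1 - ‖∑ j, conj (polarVec αp βp j) * polarVec αq βq j‖ ^ 2 =
      (cos (αq - αp) * sin (βp - βq)) ^ 2 + (sin (αq - αp) * cos (βp + βq)) ^ 2 := by
  rw [polarVec_inner, ← Complex.normSq_eq_norm_sq, Complex.normSq_add_mul_I]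
  linear_combination (-1 : ℝ) * sin_sq_add_cos_sq (αq - αp)
    - cos (αq - αp) ^ 2 * sin_sq_add_cos_sq (βp - βq)
    - sin (αq - αp) ^ 2 * sin_sq_add_cos_sq (βp + βq)

/-- For orientation angles `α_p, α_q ∈ ℝ` and ellipticity angles
`β_p, β_q ∈ (-π/4, 0) ∪ (0, π/4)`, the polarization vectors `g_p = Q(α_p)h_p` and
`g_q = Q(α_q)h_q` in `ℂ²` satisfy `|g_pᴴ g_q| = 1` if and only if `α_p = α_q + kπ` for
some integer `k` and `β_p = β_q`. -/
theorem polarization_coherence_iff {αp αq βp βq : ℝ}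
    (hβp : βp ∈ Set.Ioo (-(π / 4)) 0 ∪ Set.Ioo 0 (π / 4))
    (hβq : βq ∈ Set.Ioo (-(π / 4)) 0 ∪ Set.Ioo 0 (π / 4)) :
    ‖∑ j, conj (polarVec αp βp j) * polarVec αq βq j‖ = 1 ↔
      (∃ k : ℤ, αp = αq + k * π) ∧ βp = βq := by
  have hp : -(π / 4) < βp ∧ βp < π / 4 := by
    rcases hβp with h | h <;> constructor <;> linarith [h.1, h.2, pi_pos]
  have hq : -(π / 4) < βq ∧ βq < π / 4 := by
    rcases hβq with h | h <;> constructor <;> linarith [h.1, h.2, pi_pos]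
  have key := one_sub_norm_sq_polarVec_inner αp αq βp βq
  constructor
  · intro h
    rw [h] at key
    have hcos : cos (βp + βq) ≠ 0 :=
      (cos_pos_of_mem_Ioo ⟨by linarith, by linarith⟩).ne'
    have h₁ : cos (αq - αp) * sin (βp - βq) = 0 := by nlinarith
    have h₂ : sin (αq - αp) * cos (βp + βq) = 0 := by nlinarith
    have hsin : sin (αq - αp) = 0 := (mul_eq_zero.mp h₂).resolve_right hcos
    have hcosγ : cos (αq - αp) ≠ 0 := fun h0 => by
      simpa [hsin, h0] using sin_sq_add_cos_sq (αq - αp)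
    have hβ : sin (βp - βq) = 0 := (mul_eq_zero.mp h₁).resolve_left hcosγ
    constructor
    · obtain ⟨n, hn⟩ := sin_eq_zero_iff.mp hsin
      exact ⟨-n, by push_cast; linarith⟩
    · have := (sin_eq_zero_iff_of_lt_of_lt (by linarith) (by linarith)).mp hβ
      linarith
  · rintro ⟨⟨k, hk⟩, hβ⟩
    have hsin : sin (αq - αp) = 0 :=
      sin_eq_zero_iff.mpr ⟨-k, by push_cast; linarith⟩
    rw [hsin, hβ, sub_self, sin_zero] at key
    rw [hβ]
    exact (pow_eq_one_iff_of_nonneg (norm_nonneg _) two_ne_zero).mp (by linarith)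
end
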